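/- Let Φ : ℂ₊ → Ω₊ be the conformal representation of the domain above a Lipschitz graph Γ with constant M = ‖a'‖_∞. Then Re Φ'(z) > 0 and |Im Φ'(z)| ≤ M Re Φ'(z) for all z ∈ ℂ₊; equivalently |arg Φ'(z)| ≤ arctan M < π/2. -/

import Mathlib

open Metric Set Filter Complex

/-!
Write `Ψ = Φ⁻¹`. For a direction `ζ` in the vertical cone `K |Re ζ| ≤ Im ζ` and `t ≥ 0`, the domain
above the graph is mapped into itself by `w ↦ w + tζ`, so `F z = Ψ (Φ z + tζ)` is a holomorphic
self-map of the upper half-plane. The domain contains discs of radius tending to infinity around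
points `p` tending to infinity, and the Schwarz–Pick inequality on these discs gives
`F (Ψ p) - Ψ p = o(Im Ψ p)`. Julia's lemma at `∞` then yields `Im F ≥ Im`, that is, `Im Ψ` is
nondecreasing in the direction `ζ`. Differentiating gives `0 ≤ Im (ζ / Φ')` for every `ζ` in the
cone, and `ζ = i, ±1 + iK` confine `Φ'` to the dual sector.
-/

open Asymptotics Bornology Topology
open UpperHalfPlane (upperHalfPlaneSet isOpen_upperHalfPlaneSet)
open scoped ComplexConjugate NNReal

section Univalent

variable {U : Set ℂ} {f g : ℂ → ℂ} {z : ℂ}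

theorem map_nhds_eq_of_injOn (hU : IsOpen U) (hf : DifferentiableOn ℂ f U) (hinj : InjOn f U)
    (hz : z ∈ U) : map f (𝓝 z) = 𝓝 (f z) := by
  refine le_antisymm (hf.differentiableAt (hU.mem_nhds hz)).continuousAt
    ((hf.analyticAt (hU.mem_nhds hz)).eventually_constant_or_nhds_le_map_nhds.resolve_left
      fun hconst ↦ ?_)
  have hsub : ∀ᶠ y in 𝓝 z, y = z :=
    (hconst.and (hU.mem_nhds hz)).mono fun y hy ↦ hinj hy.2 hz hy.1
  obtain ⟨y, hy, hyz⟩ := ((hsub.filter_mono nhdsWithin_le_nhds).and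
    (self_mem_nhdsWithin (s := {z}ᶜ))).exists
  exact hyz hy

theorem tendsto_leftInvOn_nhds (hU : IsOpen U) (hf : DifferentiableOn ℂ f U) (hinj : InjOn f U)
    (hg : LeftInvOn g f U) (hz : z ∈ U) : Tendsto g (𝓝 (f z)) (𝓝 z) := by
  rw [← map_nhds_eq_of_injOn hU hf hinj hz, tendsto_map'_iff]
  exact tendsto_id.congr' ((hU.eventually_mem hz).mono fun x hx ↦ (hg hx).symm)

theorem hasDerivAt_leftInvOn_of_deriv_ne_zero (hU : IsOpen U) (hf : DifferentiableOn ℂ f U)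
    (hinj : InjOn f U) (hg : LeftInvOn g f U) (hz : z ∈ U) (hne : deriv f z ≠ 0) :
    HasDerivAt g (deriv f z)⁻¹ (f z) := by
  have hcont : ContinuousAt g (f z) := by
    simpa only [ContinuousAt, hg hz] using tendsto_leftInvOn_nhds hU hf hinj hg hz
  refine HasDerivAt.of_local_left_inverse (f := f) hcont ?_ hne ?_
  · simpa only [hg hz] using (hf.differentiableAt (hU.mem_nhds hz)).hasDerivAt
  · rw [← map_nhds_eq_of_injOn hU hf hinj hz, eventually_map]
    exact (hU.eventually_mem hz).mono fun x hx ↦ congrArg f (hg hx)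

theorem eventually_deriv_ne_zero_of_injOn (hU : IsOpen U) (hf : DifferentiableOn ℂ f U)
    (hinj : InjOn f U) (hz : z ∈ U) : ∀ᶠ y in 𝓝[≠] z, deriv f y ≠ 0 := by
  have hderiv : AnalyticAt ℂ (deriv f) z := (hf.analyticAt (hU.mem_nhds hz)).deriv
  refine hderiv.eventually_eq_zero_or_eventually_ne_zero.resolve_left fun hzero ↦ ?_
  obtain ⟨r, hr, hball⟩ := eventually_nhds_iff_ball.1 (hzero.and (hU.eventually_mem hz))
  have hconst : ∀ y ∈ ball z r, y = z := fun y hy ↦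
    hinj (hball y hy).2 hz <| isOpen_ball.is_const_of_deriv_eq_zero
      (convex_ball z r).isPreconnected (hf.mono fun x hx ↦ (hball x hx).2)
      (fun x hx ↦ (hball x hx).1) hy (mem_ball_self hr)
  exact (infinite_of_mem_nhds z (ball_mem_nhds z hr)) ((finite_singleton z).subset hconst)

theorem differentiableAt_leftInvOn (hU : IsOpen U) (hf : DifferentiableOn ℂ f U)
    (hinj : InjOn f U) (hg : LeftInvOn g f U) (hz : z ∈ U) : DifferentiableAt ℂ g (f z) := by
  refine (analyticAt_of_differentiable_on_punctured_nhds_of_continuousAt ?_ ?_).differentiableAt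
  · rw [eventually_nhdsWithin_iff, ← map_nhds_eq_of_injOn hU hf hinj hz, eventually_map]
    filter_upwards [eventually_nhdsWithin_iff.1 (eventually_deriv_ne_zero_of_injOn hU hf hinj hz),
      hU.eventually_mem hz] with y hne hy hyz
    exact (hasDerivAt_leftInvOn_of_deriv_ne_zero hU hf hinj hg hy
      (hne (ne_of_apply_ne f hyz))).differentiableAt
  · simpa only [ContinuousAt, hg hz] using tendsto_leftInvOn_nhds hU hf hinj hg hz

theorem deriv_ne_zero_of_injOn (hU : IsOpen U) (hf : DifferentiableOn ℂ f U) (hinj : InjOn f U)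
    (hz : z ∈ U) : deriv f z ≠ 0 := by
  have hg : LeftInvOn (Function.invFunOn f U) f U := hinj.leftInvOn_invFunOn
  have hchain := (differentiableAt_leftInvOn hU hf hinj hg hz).hasDerivAt.comp z
    (hf.differentiableAt (hU.mem_nhds hz)).hasDerivAt
  have hid : HasDerivAt (Function.invFunOn f U ∘ f) 1 z :=
    (hasDerivAt_id z).congr_of_eventuallyEq ((hU.eventually_mem hz).mono fun x hx ↦ hg hx)
  exact right_ne_zero_of_mul_eq_one (hchain.unique hid)

theorem hasDerivAt_leftInvOn (hU : IsOpen U) (hf : DifferentiableOn ℂ f U) (hinj : InjOn f U)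
    (hg : LeftInvOn g f U) (hz : z ∈ U) : HasDerivAt g (deriv f z)⁻¹ (f z) :=
  hasDerivAt_leftInvOn_of_deriv_ne_zero hU hf hinj hg hz (deriv_ne_zero_of_injOn hU hf hinj hz)

end Univalent

section SchwarzPick

theorem norm_sub_conj_sq_sub_norm_sub_sq (v w : ℂ) :
    ‖w - conj v‖ ^ 2 - ‖w - v‖ ^ 2 = 4 * w.im * v.im := by
  simp only [Complex.sq_norm, normSq_apply, sub_re, sub_im, conj_re, conj_im]
  ring

theorem norm_sub_lt_norm_sub_conj {v w : ℂ} (hv : 0 < v.im) (hw : 0 < w.im) :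
    ‖w - v‖ < ‖w - conj v‖ := by
  have hpos : 0 < w.im * v.im := mul_pos hw hv
  exact lt_of_pow_lt_pow_left₀ 2 (norm_nonneg _)
    (by linarith [norm_sub_conj_sq_sub_norm_sub_sq v w])

theorem norm_sub_conj_pos {v w : ℂ} (hv : 0 < v.im) (hw : 0 < w.im) : 0 < ‖w - conj v‖ :=
  (norm_nonneg _).trans_lt (norm_sub_lt_norm_sub_conj hv hw)

variable {E : Type*} [NormedAddCommGroup E] [NormedSpace ℂ E]

theorem norm_sub_le_mul_norm_sub_conj_of_mapsTo_ball {f : E → ℂ} {c z : E} {r : ℝ}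
    (hd : DifferentiableOn ℂ f (ball c r)) (hf : MapsTo f (ball c r) upperHalfPlaneSet)
    (hz : z ∈ ball c r) : ‖f z - f c‖ ≤ ‖z - c‖ / r * ‖f z - conj (f c)‖ := by
  have hc : 0 < (f c).im := hf (mem_ball_self (pos_of_mem_ball hz))
  have hne : ∀ x ∈ ball c r, f x - conj (f c) ≠ 0 := fun x hx ↦
    norm_pos_iff.1 (norm_sub_conj_pos hc (hf hx))
  have hquot : DifferentiableOn ℂ (fun x ↦ (f x - f c) / (f x - conj (f c))) (ball c r) := by
    simpa only [div_eq_mul_inv] using (hd.sub_const _).fun_mul ((hd.sub_const _).fun_inv hne)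
  have hmaps : MapsTo (fun x ↦ (f x - f c) / (f x - conj (f c))) (ball c r)
      (closedBall ((f c - f c) / (f c - conj (f c))) 1) := fun x hx ↦ by
    simpa using div_le_one_of_le₀ (norm_sub_lt_norm_sub_conj hc (hf hx)).le (norm_nonneg _)
  have hschwarz := dist_le_div_mul_dist_of_mapsTo_ball hquot hmaps hz
  simp only [dist_eq_norm, sub_self, zero_div, sub_zero, norm_div] at hschwarz
  rw [div_le_iff₀ (norm_sub_conj_pos hc (hf hz))] at hschwarz
  exact hschwarz.trans_eq (by ring)

theorem norm_sub_le_mul_im_of_mapsTo_ball {f : E → ℂ} {c z : E} {r : ℝ}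
    (hd : DifferentiableOn ℂ f (ball c r)) (hf : MapsTo f (ball c r) upperHalfPlaneSet)
    (hz : z ∈ ball c r) : ‖f z - f c‖ ≤ 2 * ‖z - c‖ / (r - ‖z - c‖) * (f c).im := by
  have hzr : ‖z - c‖ < r := mem_ball_iff_norm.1 hz
  have hr : 0 < r := pos_of_mem_ball hz
  have hc : 0 < (f c).im := hf (mem_ball_self hr)
  have htriangle : ‖f z - conj (f c)‖ ≤ ‖f z - f c‖ + 2 * (f c).im := by
    calc ‖f z - conj (f c)‖ ≤ ‖f z - f c‖ + ‖f c - conj (f c)‖ :=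
          norm_sub_le_norm_sub_add_norm_sub _ _ _
      _ = ‖f z - f c‖ + 2 * (f c).im := by simp [Complex.sub_conj, abs_of_pos hc]
  have hpick := (norm_sub_le_mul_norm_sub_conj_of_mapsTo_ball hd hf hz).trans
    (mul_le_mul_of_nonneg_left htriangle (by positivity))
  rw [div_mul_eq_mul_div, le_div_iff₀ hr] at hpick
  rw [div_mul_eq_mul_div, le_div_iff₀ (sub_pos.2 hzr)]
  linarith

theorem im_cayley_symm (v ξ : ℂ) :
    ((v - ξ * conj v) / (1 - ξ)).im = v.im * (1 - ‖ξ‖ ^ 2) / normSq (1 - ξ) := by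
  rw [div_im, ← sub_div, Complex.sq_norm]
  simp only [normSq_apply, sub_re, sub_im, mul_re, mul_im, conj_re, conj_im, one_re, one_im]
  ring

theorem norm_sub_mul_norm_sub_conj_le_of_mapsTo {F : ℂ → ℂ}
    (hd : DifferentiableOn ℂ F upperHalfPlaneSet)
    (hF : MapsTo F upperHalfPlaneSet upperHalfPlaneSet) {v z : ℂ} (hv : 0 < v.im)
    (hz : 0 < z.im) :
    ‖F z - F v‖ * ‖z - conj v‖ ≤ ‖z - v‖ * ‖F z - conj (F v)‖ := by
  set C : ℂ → ℂ := fun ξ ↦ (v - ξ * conj v) / (1 - ξ) with hC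
  have hne : ∀ ξ ∈ ball (0 : ℂ) 1, 1 - ξ ≠ 0 := by
    rintro ξ hξ h
    simp [← sub_eq_zero.1 h] at hξ
  have hCd : DifferentiableOn ℂ C (ball 0 1) := by
    refine DifferentiableOn.div ?_ ?_ hne <;> fun_prop
  have hCmaps : MapsTo C (ball 0 1) upperHalfPlaneSet := fun ξ hξ ↦ by
    have hξ1 : ‖ξ‖ ^ 2 < 1 := pow_lt_one₀ (norm_nonneg ξ) (by simpa using hξ) two_ne_zero
    rw [mem_ofPred_eq, im_cayley_symm]
    exact div_pos (mul_pos hv (sub_pos.2 hξ1)) (normSq_pos.2 (hne ξ hξ))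
  have hpos : 0 < ‖z - conj v‖ := norm_sub_conj_pos hv hz
  have hzv : z - conj v ≠ 0 := norm_pos_iff.1 hpos
  have hmem : (z - v) / (z - conj v) ∈ ball (0 : ℂ) 1 := by
    simpa [div_lt_one hpos] using norm_sub_lt_norm_sub_conj hv hz
  have hCz : C ((z - v) / (z - conj v)) = z := by
    simp only [hC]
    rw [div_eq_iff (hne _ hmem)]
    field_simp
    ring
  have hC0 : C 0 = v := by simp [hC]
  have hpick := norm_sub_le_mul_norm_sub_conj_of_mapsTo_ball (hd.comp hCd hCmaps)
    (hF.comp hCmaps) hmem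
  simp only [Function.comp_apply, hCz, hC0, sub_zero, norm_div, div_one] at hpick
  rwa [div_mul_eq_mul_div, le_div_iff₀ hpos] at hpick

theorem im_mul_im_mul_norm_sub_conj_sq_le_of_mapsTo {F : ℂ → ℂ}
    (hd : DifferentiableOn ℂ F upperHalfPlaneSet)
    (hF : MapsTo F upperHalfPlaneSet upperHalfPlaneSet) {v z : ℂ} (hv : 0 < v.im)
    (hz : 0 < z.im) :
    z.im * v.im * ‖F z - conj (F v)‖ ^ 2 ≤ (F z).im * (F v).im * ‖z - conj v‖ ^ 2 := by
  have hsq := pow_le_pow_left₀ (by positivity)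
    (norm_sub_mul_norm_sub_conj_le_of_mapsTo hd hF hv hz) 2
  rw [mul_pow, mul_pow] at hsq
  linear_combination (1 / 4) * hsq
    - ‖F z - conj (F v)‖ ^ 2 / 4 * norm_sub_conj_sq_sub_norm_sub_sq v z
    + ‖z - conj v‖ ^ 2 / 4 * norm_sub_conj_sq_sub_norm_sub_sq (F v) (F z)

end SchwarzPick

section Julia

variable {ι : Type*} {l : Filter ι}

theorem tendsto_norm_sub_div_norm_of_isEquivalent {E : Type*} [NormedAddCommGroup E]
    {u v : ι → E} (huv : u ~[l] v) (hv : Tendsto v l (cobounded E)) (c : E) :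
    Tendsto (fun i ↦ ‖u i - c‖ / ‖v i‖) l (𝓝 1) := by
  have hnorm : Tendsto (fun i ↦ ‖v i‖) l atTop := tendsto_norm_atTop_iff_cobounded.2 hv
  have hshift : (fun i ↦ u i - v i - c) =o[l] v :=
    huv.isLittleO.sub (isLittleO_const_left.2 (Or.inr hnorm))
  have hequiv : (fun i ↦ ‖u i - c‖) ~[l] fun i ↦ ‖v i‖ := by
    refine ((isBigO_of_le l fun i ↦ ?_).trans_isLittleO hshift).norm_right
    simpa [sub_right_comm] using abs_norm_sub_norm_le (u i - c) (v i)
  exact (isEquivalent_iff_tendsto_one (hnorm.eventually_ne_atTop 0)).1 hequiv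

/-- A form of **Julia's lemma** at the boundary point `∞`. -/
theorem im_le_im_of_isLittleO [l.NeBot] {F : ℂ → ℂ}
    (hd : DifferentiableOn ℂ F upperHalfPlaneSet)
    (hF : MapsTo F upperHalfPlaneSet upperHalfPlaneSet) {v : ι → ℂ}
    (hv : ∀ᶠ i in l, 0 < (v i).im) (hv_top : Tendsto v l (cobounded ℂ))
    (hFv : (fun i ↦ F (v i) - v i) =o[l] fun i ↦ (v i).im) {z : ℂ} (hz : 0 < z.im) :
    z.im ≤ (F z).im := by
  have him : Tendsto (fun i ↦ (F (v i)).im / (v i).im) l (𝓝 1) := by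
    refine (isEquivalent_iff_tendsto_one (hv.mono fun i hi ↦ hi.ne')).1 ?_
    exact (isBigO_of_le l fun i ↦ abs_im_le_norm (F (v i) - v i)).trans_isLittleO hFv
  have hequiv : (fun i ↦ F (v i)) ~[l] v :=
    hFv.trans_isBigO (isBigO_of_le l fun i ↦ abs_im_le_norm (v i))
  have hratio {u : ι → ℂ} (hu : u ~[l] v) (w : ℂ) :
      Tendsto (fun i ↦ (‖w - conj (u i)‖ / ‖v i‖) ^ 2) l (𝓝 1) := by
    have hnorm (i : ι) : ‖w - conj (u i)‖ = ‖u i - conj w‖ := by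
      rw [norm_sub_rev, ← norm_conj, map_sub, conj_conj]
    simpa only [hnorm, one_pow] using
      (tendsto_norm_sub_div_norm_of_isEquivalent hu hv_top (conj w)).pow 2
  have hlower := (hratio hequiv (F z)).const_mul z.im
  have hupper := (him.const_mul (F z).im).mul (hratio IsEquivalent.refl z)
  rw [mul_one] at hlower
  rw [mul_one, mul_one] at hupper
  refine le_of_tendsto_of_tendsto hlower hupper (hv.mono fun i hi ↦ ?_)
  have hvi : 0 < ‖v i‖ := hi.trans_le ((le_abs_self _).trans (abs_im_le_norm (v i)))
  have hpick := im_mul_im_mul_norm_sub_conj_sq_le_of_mapsTo hd hF hi hz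
  calc z.im * (‖F z - conj (F (v i))‖ / ‖v i‖) ^ 2
      = z.im * (v i).im * ‖F z - conj (F (v i))‖ ^ 2 / ((v i).im * ‖v i‖ ^ 2) := by field_simp
    _ ≤ (F z).im * (F (v i)).im * ‖z - conj (v i)‖ ^ 2 / ((v i).im * ‖v i‖ ^ 2) := by gcongr
    _ = (F z).im * ((F (v i)).im / (v i).im) * (‖z - conj (v i)‖ / ‖v i‖) ^ 2 := by field_simp

end Julia

section Translation

variable {ι : Type*} {l : Filter ι} {Ω : Set ℂ} {Φ Ψ : ℂ → ℂ} {ζ : ℂ}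

theorem tendsto_cobounded_of_rightInvOn {X Y : Type*} [Bornology X] [Bornology Y] {φ : X → Y}
    {ψ : Y → X} {S : Set X} {T : Set Y} (hφ : ∀ s ⊆ S, IsBounded s → IsBounded (φ '' s))
    (hψ : MapsTo ψ T S) (hinv : RightInvOn ψ φ T) :
    Tendsto ψ (cobounded Y ⊓ 𝓟 T) (cobounded X) := by
  intro s hs
  have hbdd : IsBounded (φ '' (S \ s)) :=
    hφ _ sdiff_subset ((isBounded_compl_iff.2 hs).subset fun x hx ↦ hx.2)
  rw [mem_map, mem_inf_principal]
  filter_upwards [isBounded_def.1 hbdd] with y hy hyT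
  by_contra hys
  exact hy ⟨ψ y, ⟨hψ hyT, hys⟩, hinv hyT⟩

theorem isLittleO_translate_sub {r : ι → ℝ} {p : ι → ℂ} (hΨ : DifferentiableOn ℂ Ψ Ω)
    (hΨmaps : MapsTo Ψ Ω upperHalfPlaneSet) (hr : Tendsto r l atTop)
    (hball : ∀ i, ball (p i) (r i) ⊆ Ω) (ζ : ℂ) :
    (fun i ↦ Ψ (p i + ζ) - Ψ (p i)) =o[l] fun i ↦ (Ψ (p i)).im := by
  have hzero : Tendsto (fun i ↦ 2 * ‖ζ‖ / (r i - ‖ζ‖)) l (𝓝 0) :=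
    (tendsto_atTop_add_const_right l (-‖ζ‖) hr).const_div_atTop _
  refine IsLittleO.of_bound fun c hc ↦ ?_
  filter_upwards [hr.eventually_gt_atTop ‖ζ‖, hzero.eventually_le_const hc] with i hi hic
  have hmem : p i + ζ ∈ ball (p i) (r i) := by simpa using hi
  have hpick := norm_sub_le_mul_im_of_mapsTo_ball (hΨ.mono (hball i)) (hΨmaps.mono_left (hball i))
    hmem
  rw [add_sub_cancel_left] at hpick
  calc ‖Ψ (p i + ζ) - Ψ (p i)‖ ≤ 2 * ‖ζ‖ / (r i - ‖ζ‖) * (Ψ (p i)).im := hpick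
    _ ≤ 2 * ‖ζ‖ / (r i - ‖ζ‖) * ‖(Ψ (p i)).im‖ := by
      have := sub_pos.2 hi
      gcongr
      exact le_abs_self _
    _ ≤ c * ‖(Ψ (p i)).im‖ := by gcongr

theorem im_le_im_translate [l.NeBot] {r : ι → ℝ} {p : ι → ℂ}
    (hΦ : DifferentiableOn ℂ Φ upperHalfPlaneSet) (hΦmaps : MapsTo Φ upperHalfPlaneSet Ω)
    (hΨ : DifferentiableOn ℂ Ψ Ω) (hΨmaps : MapsTo Ψ Ω upperHalfPlaneSet)
    (hinv : InvOn Ψ Φ upperHalfPlaneSet Ω) (hζ : ∀ w ∈ Ω, w + ζ ∈ Ω)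
    (hr : Tendsto r l atTop) (hball : ∀ i, ball (p i) (r i) ⊆ Ω)
    (hp : Tendsto (fun i ↦ Ψ (p i)) l (cobounded ℂ)) {w : ℂ} (hw : w ∈ Ω) :
    (Ψ w).im ≤ (Ψ (w + ζ)).im := by
  have hmaps : MapsTo (fun z ↦ Φ z + ζ) upperHalfPlaneSet Ω := fun z hz ↦ hζ _ (hΦmaps hz)
  have hpΩ : ∀ᶠ i in l, p i ∈ Ω := (hr.eventually_gt_atTop 0).mono fun i hi ↦
    hball i (mem_ball_self hi)
  have hasymp : (fun i ↦ Ψ (Φ (Ψ (p i)) + ζ) - Ψ (p i)) =o[l] fun i ↦ (Ψ (p i)).im :=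
    (isLittleO_translate_sub hΨ hΨmaps hr hball ζ).congr'
      (hpΩ.mono fun i hi ↦ by simp only [hinv.2 hi]) EventuallyEq.rfl
  have hjulia := im_le_im_of_isLittleO (hΨ.comp (hΦ.add_const ζ) hmaps) (hΨmaps.comp hmaps)
    (hpΩ.mono fun i hi ↦ hΨmaps hi) hp hasymp (hΨmaps hw)
  simpa only [Function.comp_apply, hinv.2 hw] using hjulia

theorem im_mul_nonneg_of_im_le_translate {f : ℂ → ℂ} {f' w : ℂ} (hf : HasDerivAt f f' w)
    (hmono : ∀ t : ℝ, 0 ≤ t → (f w).im ≤ (f (w + t * ζ)).im) : 0 ≤ (ζ * f').im := by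
  have hmin : IsMinOn (fun x ↦ (f x).im) (segment ℝ w (w + ζ)) w := by
    rw [segment_eq_image']
    rintro _ ⟨t, ht, rfl⟩
    simpa using hmono t ht.1
  have him : HasFDerivAt (fun x ↦ (f x).im) _ w :=
    imCLM.hasFDerivAt.comp w (hf.hasFDerivAt.restrictScalars ℝ)
  simpa using hmin.localize.hasFDerivWithinAt_nonneg him.hasFDerivWithinAt
    (mem_posTangentConeAt_of_segment_subset Subset.rfl)

theorem im_mul_inv_deriv_nonneg [l.NeBot] {r : ι → ℝ} {p : ι → ℂ}
    (hΦ : DifferentiableOn ℂ Φ upperHalfPlaneSet) (hinj : InjOn Φ upperHalfPlaneSet)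
    (hbdd : ∀ s ⊆ upperHalfPlaneSet, IsBounded s → IsBounded (Φ '' s))
    (hζ : ∀ w ∈ Φ '' upperHalfPlaneSet, ∀ t : ℝ, 0 ≤ t → w + t * ζ ∈ Φ '' upperHalfPlaneSet)
    (hr : Tendsto r l atTop) (hp : Tendsto p l (cobounded ℂ))
    (hball : ∀ i, ball (p i) (r i) ⊆ Φ '' upperHalfPlaneSet) {z : ℂ} (hz : 0 < z.im) :
    0 ≤ (ζ * (deriv Φ z)⁻¹).im := by
  set Ψ := Function.invFunOn Φ upperHalfPlaneSet
  have hΨmaps : MapsTo Ψ (Φ '' upperHalfPlaneSet) upperHalfPlaneSet :=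
    (surjOn_image _ _).mapsTo_invFunOn
  have hinv : InvOn Ψ Φ upperHalfPlaneSet (Φ '' upperHalfPlaneSet) :=
    ⟨hinj.leftInvOn_invFunOn, (surjOn_image _ _).rightInvOn_invFunOn⟩
  have hΨ (x : ℂ) (hx : 0 < x.im) : HasDerivAt Ψ (deriv Φ x)⁻¹ (Φ x) :=
    hasDerivAt_leftInvOn isOpen_upperHalfPlaneSet hΦ hinj hinv.1 hx
  have hΨd : DifferentiableOn ℂ Ψ (Φ '' upperHalfPlaneSet) := by
    rintro _ ⟨x, hx, rfl⟩
    exact (hΨ x hx).differentiableAt.differentiableWithinAt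
  have hpΩ : ∀ᶠ i in l, p i ∈ Φ '' upperHalfPlaneSet :=
    (hr.eventually_gt_atTop 0).mono fun i hi ↦ hball i (mem_ball_self hi)
  have hΨp : Tendsto (fun i ↦ Ψ (p i)) l (cobounded ℂ) :=
    (tendsto_cobounded_of_rightInvOn hbdd hΨmaps hinv.2).comp
      (tendsto_inf.2 ⟨hp, tendsto_principal.2 hpΩ⟩)
  exact im_mul_nonneg_of_im_le_translate (hΨ z hz) fun t ht ↦
    im_le_im_translate hΦ (mapsTo_image _ _) hΨd hΨmaps hinv (fun w hw ↦ hζ w hw t ht) hr hball hΨp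
      (mem_image_of_mem Φ hz)

end Translation

section VerticalCone

/-- The closed cone of directions `ζ` with `K * |Re ζ| ≤ Im ζ`, along which the domain above a
graph with Lipschitz constant `K` is invariant under translation. -/
def verticalCone (K : ℝ) : Set ℂ := {ζ | K * |ζ.re| ≤ ζ.im}

theorem ofReal_mul_mem_verticalCone {K t : ℝ} {ζ : ℂ} (hζ : ζ ∈ verticalCone K) (ht : 0 ≤ t) :
    t * ζ ∈ verticalCone K := by
  have h : t * (K * |ζ.re|) ≤ t * ζ.im := mul_le_mul_of_nonneg_left hζ ht
  simpa [verticalCone, abs_mul, abs_of_nonneg ht, mul_left_comm] using h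

theorem ball_subset_verticalCone {K : ℝ} (hK : 0 ≤ K) (y : ℝ) :
    ball (y * I) (y / (1 + K)) ⊆ verticalCone K := by
  intro ζ hζ
  have hdist : (1 + K) * ‖ζ - y * I‖ < y := by
    rwa [mem_ball_iff_norm, lt_div_iff₀' (by positivity)] at hζ
  have hre : |ζ.re| ≤ ‖ζ - y * I‖ := by simpa using abs_re_le_norm (ζ - y * I)
  have him : y - ζ.im ≤ ‖ζ - y * I‖ := by
    simpa using (neg_le_abs _).trans (abs_im_le_norm (ζ - y * I))
  have hKre : K * |ζ.re| ≤ K * ‖ζ - y * I‖ := mul_le_mul_of_nonneg_left hre hK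
  simp only [verticalCone, mem_ofPred_eq]
  linarith

theorem add_mem_epigraph_of_mem_verticalCone {a : ℝ → ℝ} {K : ℝ≥0} (ha : LipschitzWith K a)
    {w ζ : ℂ} (hw : a w.re < w.im) (hζ : ζ ∈ verticalCone K) : a (w + ζ).re < (w + ζ).im := by
  have hlip : a (w.re + ζ.re) ≤ a w.re + K * |ζ.re| := by
    simpa [Real.dist_eq] using ha.le_add_mul (w.re + ζ.re) w.re
  have hcone : K * |ζ.re| ≤ ζ.im := hζ
  simp only [add_re, add_im]
  linarith

theorem abs_im_le_mul_re_of_im_mul_inv_nonneg {K : ℝ} {d : ℂ} (hd : d ≠ 0)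
    (hcone : ∀ ζ ∈ verticalCone K, 0 ≤ (ζ * d⁻¹).im) : 0 < d.re ∧ |d.im| ≤ K * d.re := by
  have hcross : ∀ ζ ∈ verticalCone K, 0 ≤ ζ.im * d.re - ζ.re * d.im := fun ζ hζ ↦ by
    have h := hcone ζ hζ
    rwa [← div_eq_mul_inv, div_im, ← sub_div, le_div_iff₀ (normSq_pos.2 hd), zero_mul] at h
  have hvert := hcross I (by simp [verticalCone])
  have hright := hcross ⟨1, K⟩ (by simp [verticalCone])
  have hleft := hcross ⟨-1, K⟩ (by simp [verticalCone])
  simp only [I_re, I_im, one_mul, zero_mul, sub_zero, neg_one_mul, sub_neg_eq_add]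
    at hvert hright hleft
  have hsector : |d.im| ≤ K * d.re := abs_le.2 ⟨by linarith, by linarith⟩
  refine ⟨hvert.lt_of_ne fun hre ↦ hd (Complex.ext hre.symm ?_), hsector⟩
  rwa [← hre, mul_zero, abs_nonpos_iff] at hsector

theorem abs_arg_le_arctan {w : ℂ} {K : ℝ} (hre : 0 < w.re) (him : |w.im| ≤ K * w.re) :
    |arg w| ≤ Real.arctan K := by
  obtain ⟨hgt, hlt⟩ := abs_lt.1 (abs_arg_lt_pi_div_two_iff.2 (Or.inl hre))
  have harg : arg w = Real.arctan (w.im / w.re) := by rw [← tan_arg, Real.arctan_tan hgt hlt]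
  obtain ⟨hlower, hupper⟩ : -K ≤ w.im / w.re ∧ w.im / w.re ≤ K := by
    rwa [← abs_le, abs_div, abs_of_pos hre, div_le_iff₀ hre]
  rw [harg, abs_le, ← Real.arctan_neg]
  exact ⟨Real.arctan_mono hlower, Real.arctan_mono hupper⟩

end VerticalCone

section Conformal

theorem deriv_mem_sector_of_add_verticalCone {Φ : ℂ → ℂ} {K : ℝ} (hK : 0 ≤ K)
    (hΦ : DifferentiableOn ℂ Φ upperHalfPlaneSet) (hinj : InjOn Φ upperHalfPlaneSet)
    (hbdd : ∀ s ⊆ upperHalfPlaneSet, IsBounded s → IsBounded (Φ '' s))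
    (hcone : ∀ w ∈ Φ '' upperHalfPlaneSet, ∀ ζ ∈ verticalCone K,
      w + ζ ∈ Φ '' upperHalfPlaneSet) {z : ℂ} (hz : 0 < z.im) :
    0 < (deriv Φ z).re ∧ |(deriv Φ z).im| ≤ K * (deriv Φ z).re := by
  have hballs (y : ℝ) : ball (Φ z + y * I) (y / (1 + K)) ⊆ Φ '' upperHalfPlaneSet := fun x hx ↦ by
    have hx' : x - Φ z ∈ ball (y * I) (y / (1 + K)) := by
      rwa [mem_ball_iff_norm, sub_sub, ← mem_ball_iff_norm]
    simpa using hcone _ (mem_image_of_mem Φ hz) _ (ball_subset_verticalCone hK y hx')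
  have hradii : Tendsto (fun y : ℝ ↦ y / (1 + K)) atTop atTop :=
    tendsto_id.atTop_div_const (by positivity)
  have hcenters : Tendsto (fun y : ℝ ↦ Φ z + y * I) atTop (cobounded ℂ) := by
    refine tendsto_norm_atTop_iff_cobounded.1 (tendsto_atTop_mono (fun y ↦ abs_im_le_norm _)
      (tendsto_abs_atTop_atTop.comp ?_))
    simpa using tendsto_atTop_add_const_left atTop (Φ z).im tendsto_id
  exact abs_im_le_mul_re_of_im_mul_inv_nonneg
    (deriv_ne_zero_of_injOn isOpen_upperHalfPlaneSet hΦ hinj hz) fun ζ hζ ↦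
      im_mul_inv_deriv_nonneg hΦ hinj hbdd
        (fun w hw t ht ↦ hcone w hw _ (ofReal_mul_mem_verticalCone hζ ht)) hradii hcenters hballs hz

theorem isBounded_image_of_continuousOn_closure {X Y : Type*} [PseudoMetricSpace X] [ProperSpace X]
    [PseudoMetricSpace Y] {f : X → Y} {s t : Set X} (hf : ContinuousOn f (closure t)) (hst : s ⊆ t)
    (hs : IsBounded s) : IsBounded (f '' s) :=
  (hs.isCompact_closure.image_of_continuousOn
    (hf.mono (closure_mono hst))).isBounded.subset (image_mono subset_closure)

/-- Boundedness of `Φ` on bounded sets says that `Φ⁻¹ w → ∞` as `w → ∞` in the image. -/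
theorem conformal_deriv_sector_general {a : ℝ → ℝ} {K : ℝ≥0} (ha : LipschitzWith K a) {Φ : ℂ → ℂ}
    (hΦ : DifferentiableOn ℂ Φ upperHalfPlaneSet) (hinj : InjOn Φ upperHalfPlaneSet)
    (hbdd : ∀ s ⊆ upperHalfPlaneSet, IsBounded s → IsBounded (Φ '' s))
    (honto : Φ '' upperHalfPlaneSet = {w : ℂ | a w.re < w.im}) {z : ℂ} (hz : 0 < z.im) :
    0 < (deriv Φ z).re ∧ |(deriv Φ z).im| ≤ K * (deriv Φ z).re ∧
      |arg (deriv Φ z)| ≤ Real.arctan K ∧ Real.arctan K < Real.pi / 2 := by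
  have hcone : ∀ w ∈ Φ '' upperHalfPlaneSet, ∀ ζ ∈ verticalCone K,
      w + ζ ∈ Φ '' upperHalfPlaneSet := by
    rw [honto]
    exact fun w hw ζ hζ ↦ add_mem_epigraph_of_mem_verticalCone ha hw hζ
  obtain ⟨hre, him⟩ := deriv_mem_sector_of_add_verticalCone K.coe_nonneg hΦ hinj hbdd hcone hz
  exact ⟨hre, him, abs_arg_le_arctan hre him, Real.arctan_lt_pi_div_two K⟩

end Conformal

/-- For the conformal map `Φ` of the upper half-plane onto the domain above a
Lipschitz graph with constant `M`, one has `Re Φ'(z) > 0` and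
`|Im Φ'(z)| ≤ M · Re Φ'(z)` for all `z` in the upper half-plane; equivalently
`|arg Φ'(z)| ≤ arctan M < π/2`. -/
theorem conformal_deriv_sector
    (a : ℝ → ℝ) (M : ℝ) (hM : 0 ≤ M) (ha : LipschitzWith (Real.toNNReal M) a)
    (Γ : Set ℂ) (hΓ : Γ = {w : ℂ | w.im = a w.re})
    (Ω : Set ℂ) (hΩ : Ω = {w : ℂ | a w.re < w.im})
    (Φ : ℂ → ℂ)
    (hΦd : DifferentiableOn ℂ Φ {z : ℂ | 0 < z.im})
    (hΦinj : Set.InjOn Φ {z : ℂ | 0 < z.im})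
    (hΦonto : Φ '' {z : ℂ | 0 < z.im} = Ω)
    (hΦc : ContinuousOn Φ {z : ℂ | 0 ≤ z.im})
    (hΦbd : Φ '' {z : ℂ | z.im = 0} = Γ)
    (hPhiInf : Tendsto Φ (Filter.cocompact ℂ ⊓ Filter.principal {z : ℂ | 0 < z.im})
      (Filter.cocompact ℂ)) :
    ∀ z : ℂ, 0 < z.im →
      0 < (deriv Φ z).re ∧ |(deriv Φ z).im| ≤ M * (deriv Φ z).re ∧
      |Complex.arg (deriv Φ z)| ≤ Real.arctan M ∧ Real.arctan M < Real.pi / 2 := by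
  intro z hz
  simpa only [Real.coe_toNNReal M hM] using conformal_deriv_sector_general ha hΦd hΦinj
    (fun _ ↦ isBounded_image_of_continuousOn_closure (by rwa [closure_setOfPred_lt_im]))
    (hΦonto.trans hΩ) hz
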